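/- Let f : ℝ^d → ℝ^d satisfy f(0) = 0, be Lipschitz continuous with constant C_L > 0, and be strongly monotone with constant ω_f > 0, i.e. ⟨f(x) − f(y), x − y⟩ ≥ ω_f |x − y|² for all x, y ∈ ℝ^d. Let τ > 0, Δt > 0, ε₀ > 0 and ε_s > ε_∞ be real constants, and let (Ω, μ) be a measure space. Then for any given P_prev, E ∈ L²(μ; ℝ^d) there exists a unique P ∈ L²(μ; ℝ^d) such that τ⟨(P − P_prev)/Δt, Ψ⟩ + ⟨f∘P, Ψ⟩ = ε₀(ε_s − ε_∞)⟨E, Ψ⟩ for every Ψ ∈ L²(μ; ℝ^d). -/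

import Mathlib

open MeasureTheory
open scoped RealInnerProductSpace

/-!
Pairing with arbitrary `Ψ` turns the weak equation into `c • P + f ∘ P = c • Pprev + G` in `L²`,
with `c = τ / Δt` and `G = (ε₀ * (εs - εinf)) • E`. The left-hand side is a Lipschitz operator of
`P`, and the pointwise inequality for `f` makes it strongly monotone with constant `c + ω`. A
Lipschitz strongly monotone operator `A` on a Hilbert space is bijective (Zarantonello): for small
`ρ > 0` the map `x ↦ x - ρ • (A x - b)` is a contraction, and its fixed points are the solutions
of `A x = b`.
-/

open scoped NNReal

/-- The operator `A` is strongly monotone with constant `ω`. The constant may have any sign: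
`ω = 0` is plain monotonicity, and `ω < 0` allows a controlled failure of monotonicity. -/
def StronglyMonotoneWith {H : Type*} [NormedAddCommGroup H] [InnerProductSpace ℝ H]
    (ω : ℝ) (A : H → H) : Prop :=
  ∀ x y, ω * ‖x - y‖ ^ 2 ≤ ⟪A x - A y, x - y⟫

namespace StronglyMonotoneWith

variable {H : Type*} [NormedAddCommGroup H] [InnerProductSpace ℝ H] {A : H → H} {ω : ℝ} {K : ℝ≥0}

lemma smul_id_add (hA : StronglyMonotoneWith ω A) (c : ℝ) :
    StronglyMonotoneWith (c + ω) fun x ↦ c • x + A x := by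
  intro x y
  calc (c + ω) * ‖x - y‖ ^ 2
      ≤ c * ‖x - y‖ ^ 2 + ⟪A x - A y, x - y⟫ := by
        rw [add_mul]
        gcongr
        exact hA x y
    _ = ⟪c • x + A x - (c • y + A y), x - y⟫ := by
        rw [add_sub_add_comm, ← smul_sub, inner_add_left, real_inner_smul_left,
          real_inner_self_eq_norm_sq]

lemma norm_sub_smul_sub_sq_le (hA : StronglyMonotoneWith ω A) (hK : LipschitzWith K A)
    {ρ : ℝ} (hρ : 0 ≤ ρ) (x y : H) :
    ‖(x - y) - ρ • (A x - A y)‖ ^ 2 ≤ (1 - 2 * ρ * ω + ρ ^ 2 * K ^ 2) * ‖x - y‖ ^ 2 := by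
  calc ‖(x - y) - ρ • (A x - A y)‖ ^ 2
      = ‖x - y‖ ^ 2 - 2 * ρ * ⟪A x - A y, x - y⟫ + ρ ^ 2 * ‖A x - A y‖ ^ 2 := by
        rw [norm_sub_sq_real, real_inner_smul_right, real_inner_comm, norm_smul, mul_pow,
          Real.norm_eq_abs, sq_abs, mul_assoc]
    _ ≤ ‖x - y‖ ^ 2 - 2 * ρ * (ω * ‖x - y‖ ^ 2) + ρ ^ 2 * (K * ‖x - y‖) ^ 2 := by
        gcongr
        · exact hA x y
        · exact hK.norm_sub_le x y
    _ = (1 - 2 * ρ * ω + ρ ^ 2 * K ^ 2) * ‖x - y‖ ^ 2 := by ring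

lemma contractingWith_sub_smul_sub (hA : StronglyMonotoneWith ω A) (hK : LipschitzWith K A)
    {ρ : ℝ} (hρ : 0 < ρ) (hρK : ρ * K ^ 2 < 2 * ω) (b : H) :
    ContractingWith (√(1 - 2 * ρ * ω + ρ ^ 2 * K ^ 2)).toNNReal fun x ↦ x - ρ • (A x - b) := by
  constructor
  · rw [Real.toNNReal_lt_one, Real.sqrt_lt' one_pos]
    linarith [mul_lt_mul_of_pos_left hρK hρ]
  · refine LipschitzWith.of_dist_le' fun x y ↦ ?_
    have hdiff : x - ρ • (A x - b) - (y - ρ • (A y - b)) = (x - y) - ρ • (A x - A y) := by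
      module
    rw [dist_eq_norm, dist_eq_norm, hdiff, ← Real.sqrt_sq (norm_nonneg (x - y)),
      ← Real.sqrt_mul' _ (sq_nonneg _)]
    exact Real.le_sqrt_of_sq_le (hA.norm_sub_smul_sub_sq_le hK hρ.le x y)

theorem bijective [CompleteSpace H] (hA : StronglyMonotoneWith ω A) (hK : LipschitzWith K A)
    (hω : 0 < ω) : Function.Bijective A := by
  obtain ⟨ρ, hρ, hρK⟩ : ∃ ρ : ℝ, 0 < ρ ∧ ρ * K ^ 2 < 2 * ω := by
    refine ⟨ω / (K ^ 2 + 1), by positivity, ?_⟩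
    rw [div_mul_eq_mul_div, div_lt_iff₀ (by positivity)]
    nlinarith [mul_nonneg hω.le (sq_nonneg (K : ℝ))]
  refine (Function.bijective_iff_existsUnique A).2 fun b ↦ ?_
  have hT := hA.contractingWith_sub_smul_sub hK hρ hρK b
  have fixed_iff (x : H) :
      Function.IsFixedPt (fun x ↦ x - ρ • (A x - b)) x ↔ A x = b := by
    rw [Function.IsFixedPt, sub_eq_self, smul_eq_zero_iff_right hρ.ne', sub_eq_zero]
  exact ⟨_, (fixed_iff _).1 hT.fixedPoint_isFixedPt,
    fun y hy ↦ hT.fixedPoint_unique ((fixed_iff y).2 hy)⟩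

lemma compLp {Ω : Type*} [MeasurableSpace Ω] {μ : Measure Ω} (hA : StronglyMonotoneWith ω A)
    (hK : LipschitzWith K A) (hA0 : A 0 = 0) :
    StronglyMonotoneWith ω (hK.compLp hA0 : Lp H 2 μ → Lp H 2 μ) := by
  intro u v
  rw [← real_inner_self_eq_norm_sq, ← real_inner_smul_left, L2.inner_def, L2.inner_def]
  refine integral_mono_ae (L2.integrable_inner _ _) (L2.integrable_inner _ _) ?_
  filter_upwards [hK.coeFn_compLp hA0 u, hK.coeFn_compLp hA0 v,
    Lp.coeFn_sub (hK.compLp hA0 u) (hK.compLp hA0 v), Lp.coeFn_sub u v,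
    Lp.coeFn_smul ω (u - v)] with x hAu hAv hAsub hsub hsmul
  rw [hsmul, hAsub, Pi.smul_apply, Pi.sub_apply, hsub, Pi.sub_apply, hAu, hAv,
    real_inner_smul_left, real_inner_self_eq_norm_sq]
  exact hA (u x) (v x)

end StronglyMonotoneWith

lemma inner_compLp_eq_integral {V W Ω : Type*} [NormedAddCommGroup V] [NormedAddCommGroup W]
    [InnerProductSpace ℝ W] [MeasurableSpace Ω] {μ : Measure Ω} {f : V → W} {K : ℝ≥0}
    (hf : LipschitzWith K f) (hf0 : f 0 = 0) (u : Lp V 2 μ) (v : Lp W 2 μ) :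
    ⟪hf.compLp hf0 u, v⟫ = ∫ x, ⟪f (u x), v x⟫ ∂μ := by
  rw [L2.inner_def]
  refine integral_congr_ae ?_
  filter_upwards [hf.coeFn_compLp hf0 u] with x hx
  rw [hx, Function.comp_apply]

theorem stmt_2_general {V Ω : Type*} [NormedAddCommGroup V] [InnerProductSpace ℝ V]
    [CompleteSpace V] [MeasurableSpace Ω] (μ : Measure Ω) {f : V → V} (hf0 : f 0 = 0)
    {K : ℝ≥0} (hf : LipschitzWith K f) {ω : ℝ} (hmono : StronglyMonotoneWith ω f)
    {c : ℝ} (hc : 0 < c + ω) (Pprev G : Lp V 2 μ) :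
    ∃! P : Lp V 2 μ, ∀ Ψ : Lp V 2 μ,
      c * ⟪P - Pprev, Ψ⟫ + (∫ x, ⟪f (P x), Ψ x⟫ ∂μ) = ⟪G, Ψ⟫ := by
  let A : Lp V 2 μ → Lp V 2 μ := fun P ↦ c • P + hf.compLp hf0 P
  have weak_iff (P : Lp V 2 μ) :
      (∀ Ψ : Lp V 2 μ, c * ⟪P - Pprev, Ψ⟫ + (∫ x, ⟪f (P x), Ψ x⟫ ∂μ) = ⟪G, Ψ⟫) ↔
        A P = c • Pprev + G := by
    simp only [← inner_compLp_eq_integral hf hf0, ← real_inner_smul_left, ← inner_add_left]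
    rw [← ext_iff_inner_right ℝ, smul_sub, sub_add_eq_add_sub, sub_eq_iff_eq_add']
  have hA : Function.Bijective A :=
    ((hmono.compLp hf hf0).smul_id_add c).bijective
      ((lipschitzWith_smul c).add (hf.lipschitzWith_compLp hf0)) hc
  simpa only [weak_iff] using hA.existsUnique (c • Pprev + G)

/-- Theorem 2: unique solvability of the semi-discrete-in-time polarization
equation `τ⟨(P - P_prev)/Δt, Ψ⟩ + ⟨f∘P, Ψ⟩ = ε₀(ε_s - ε_∞)⟨E, Ψ⟩` in
`L²(μ; ℝ^d)`, for `f` Lipschitz, strongly monotone, with `f 0 = 0`. -/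
theorem stmt_2 (d : ℕ)
    (f : EuclideanSpace ℝ (Fin d) → EuclideanSpace ℝ (Fin d))
    (hf0 : f 0 = 0)
    (C_L : ℝ) (hCL : 0 < C_L)
    (hLip : ∀ x y : EuclideanSpace ℝ (Fin d), ‖f x - f y‖ ≤ C_L * ‖x - y‖)
    (ωf : ℝ) (hωf : 0 < ωf)
    (hmono : ∀ x y : EuclideanSpace ℝ (Fin d),
      ωf * ‖x - y‖ ^ 2 ≤ ⟪f x - f y, x - y⟫)
    (τ Δt ε₀ εs εinf : ℝ) (hτ : 0 < τ) (hΔt : 0 < Δt) (hε₀ : 0 < ε₀) (hε : εinf < εs)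
    {Ω : Type*} [MeasurableSpace Ω] (μ : Measure Ω)
    (Pprev E : Lp (EuclideanSpace ℝ (Fin d)) 2 μ) :
    ∃! P : Lp (EuclideanSpace ℝ (Fin d)) 2 μ,
      ∀ Ψ : Lp (EuclideanSpace ℝ (Fin d)) 2 μ,
        τ * ⟪Δt⁻¹ • (P - Pprev), Ψ⟫ + (∫ x, ⟪f (P x), Ψ x⟫ ∂μ)
          = ε₀ * (εs - εinf) * ⟪E, Ψ⟫ := by
  have hf : LipschitzWith C_L.toNNReal f :=
    LipschitzWith.of_dist_le' fun x y ↦ by simpa only [dist_eq_norm] using hLip x y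
  simpa only [real_inner_smul_left, mul_assoc] using
    stmt_2_general μ hf0 hf hmono (c := τ * Δt⁻¹) (by positivity) Pprev ((ε₀ * (εs - εinf)) • E)
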